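/- Let r(x;a,b) be an empty rectangle connecting the generator x to y = x∘(a b). Then M(x) − M(y) = 1 − 2·(the number of indices m with O_m lying in r(x;a,b)), and for each component i, A_i(x) − A_i(y) = (the number of m ∈ S_i with X_m lying in r(x;a,b)) − (the number of m ∈ S_i with O_m lying in r(x;a,b)). In particular, since the first count is nonnegative, the differential counting empty rectangles drops the Maslov degree by one and respects the Alexander filtration. -/

import Mathlib

open Equiv
open scoped Classical

/-- Emptiness of the rectangle `r(x; a, b)` on the toroidal grid determined by the
generator `x`. -/
def RectEmpty (n : ℕ) (x : Equiv.Perm (Fin n)) (a b : Fin n) : Prop :=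
  ∀ k : Fin n, k ≠ a → k ≠ b →
    ¬((k - a).val < (b - a).val ∧ (x k - x a).val < (x b - x a).val)

/-- `cntMark n σ x a b m = 1` if the marking placed (by `σ`) in column `m`, row `σ m`
lies in the rectangle `r(x; a, b)`, and `0` otherwise. -/
def cntMark (n : ℕ) (σ x : Equiv.Perm (Fin n)) (a b m : Fin n) : ℕ :=
  if (m - a).val < (b - a).val ∧ (σ m - x a).val < (x b - x a).val then 1 else 0

/-- `I(A, B)` for the families of planar points `A|_S` and `B|_T`:
the number of pairs of points `(p, q)` with `p₁ < q₁` and `p₂ < q₂`. -/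
def Icnt (n : ℕ) (A B : Fin n → ℚ × ℚ) (S T : Finset (Fin n)) : ℚ :=
  ∑ a ∈ S, ∑ b ∈ T, if (A a).1 < (B b).1 ∧ (A a).2 < (B b).2 then 1 else 0

/-- `J(A, B) = (I(A, B) + I(B, A)) / 2`. -/
def Jq (n : ℕ) (A B : Fin n → ℚ × ℚ) (S T : Finset (Fin n)) : ℚ :=
  (Icnt n A B S T + Icnt n B A T S) / 2

/-- The planar lift of a generator `x`: the points `(k, x k)`. -/
def ptsGen (n : ℕ) (x : Equiv.Perm (Fin n)) : Fin n → ℚ × ℚ :=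
  fun k => ((k : ℚ), ((x k : ℕ) : ℚ))

/-- The planar lift of the markings placed by `σ`: the points `(m + ½, σ m + ½)`. -/
def ptsMark (n : ℕ) (σ : Equiv.Perm (Fin n)) : Fin n → ℚ × ℚ :=
  fun m => ((m : ℚ) + 1/2, ((σ m : ℕ) : ℚ) + 1/2)

/-- The Maslov degree `M(x) = J(x − O, x − O) + 1`, expanded bilinearly. -/
def Maslov (n : ℕ) (σO : Equiv.Perm (Fin n)) (x : Equiv.Perm (Fin n)) : ℚ :=
  Jq n (ptsGen n x) (ptsGen n x) Finset.univ Finset.univ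
    - 2 * Jq n (ptsGen n x) (ptsMark n σO) Finset.univ Finset.univ
    + Jq n (ptsMark n σO) (ptsMark n σO) Finset.univ Finset.univ + 1

/-- The Alexander degree `A_S(x) = J(x − ½(X + O), X_S − O_S) − (|S| − 1)/2`
associated to the component `S`, expanded bilinearly. -/
def Alex (n : ℕ) (σO σX : Equiv.Perm (Fin n)) (S : Finset (Fin n))
    (x : Equiv.Perm (Fin n)) : ℚ :=
  Jq n (ptsGen n x) (ptsMark n σX) Finset.univ S
    - Jq n (ptsGen n x) (ptsMark n σO) Finset.univ S
    - (1/2) * Jq n (ptsMark n σX) (ptsMark n σX) Finset.univ S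
    + (1/2) * Jq n (ptsMark n σX) (ptsMark n σO) Finset.univ S
    - (1/2) * Jq n (ptsMark n σO) (ptsMark n σX) Finset.univ S
    + (1/2) * Jq n (ptsMark n σO) (ptsMark n σO) Finset.univ S
    - ((S.card : ℚ) - 1) / 2

/-- The indicator of the half-open cyclic interval from `a` to `b`. -/
def cyclicInd {n : ℕ} (a b k : Fin n) : ℚ :=
  if (k - a).val < (b - a).val then 1 else 0

/-- The difference of the indicators of the rays starting at `a` and at `b`. -/
def rayDiff {n : ℕ} (a b k : Fin n) : ℚ :=
  (if a ≤ k then 1 else 0) - (if b ≤ k then 1 else 0)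

/-- The indicator of a cyclic interval from `a` to `b` that wraps around. -/
def wrapInd {n : ℕ} (a b : Fin n) : ℚ :=
  if b < a then 1 else 0

lemma Fin.val_sub_eq_ite {n : ℕ} (k a : Fin n) :
    (k - a).val = if a.val ≤ k.val then k.val - a.val else n + k.val - a.val := by
  split_ifs with h
  · exact Fin.sub_val_of_le h
  · exact Fin.coe_sub_iff_lt.mpr (by simpa using h)

lemma cyclicInd_eq_rayDiff_add_wrapInd {n : ℕ} {a b : Fin n} (hab : a ≠ b) (k : Fin n) :
    cyclicInd a b k = rayDiff a b k + wrapInd a b := by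
  have hab' : a.val ≠ b.val := fun h => hab (Fin.ext h)
  have ha := a.isLt
  have hb := b.isLt
  have hk := k.isLt
  simp only [cyclicInd, rayDiff, wrapInd, Fin.val_sub_eq_ite, Fin.le_def, Fin.lt_def]
  split_ifs <;> first | omega | norm_num

lemma cyclicInd_left {n : ℕ} {a b : Fin n} (hab : a ≠ b) : cyclicInd a b a = 1 := by
  have hab' : a.val ≠ b.val := fun h => hab (Fin.ext h)
  have ha := a.isLt
  have hb := b.isLt
  simp only [cyclicInd, Fin.val_sub_eq_ite]
  split_ifs <;> first | omega | norm_num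

lemma cyclicInd_right {n : ℕ} (a b : Fin n) : cyclicInd a b b = 0 := by
  simp [cyclicInd]

lemma cntMark_eq_cyclicInd_mul {n : ℕ} (σ x : Equiv.Perm (Fin n)) (a b m : Fin n) :
    (cntMark n σ x a b m : ℚ) = cyclicInd a b m * cyclicInd (x a) (x b) (σ m) := by
  simp only [cntMark, cyclicInd]
  split_ifs <;> simp_all

lemma RectEmpty.cyclicInd_mul_eq_zero {n : ℕ} {x : Equiv.Perm (Fin n)} {a b : Fin n}
    (h : RectEmpty n x a b) {k : Fin n} (hka : k ≠ a) (hkb : k ≠ b) :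
    cyclicInd a b k * cyclicInd (x a) (x b) (x k) = 0 := by
  have := h k hka hkb
  simp only [cyclicInd]
  split_ifs <;> simp_all

lemma rayDiff_mul_rayDiff {n : ℕ} {x : Equiv.Perm (Fin n)} {a b : Fin n} (hab : a ≠ b)
    (k r : Fin n) :
    rayDiff a b k * rayDiff (x a) (x b) r =
      cyclicInd a b k * cyclicInd (x a) (x b) r - wrapInd a b * cyclicInd (x a) (x b) r
        - wrapInd (x a) (x b) * cyclicInd a b k + wrapInd a b * wrapInd (x a) (x b) := by
  rw [cyclicInd_eq_rayDiff_add_wrapInd hab,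
    cyclicInd_eq_rayDiff_add_wrapInd (x.injective.ne hab)]
  ring

lemma sum_eq_add_add_sum_compl_pair {n : ℕ} {a b : Fin n} (hab : a ≠ b) (f : Fin n → ℚ) :
    ∑ k, f k = f a + f b + ∑ k ∈ ({a, b} : Finset (Fin n))ᶜ, f k := by
  rw [← Finset.sum_add_sum_compl {a, b}, Finset.sum_pair hab]

lemma mul_swap_apply_of_mem_compl_pair {n : ℕ} (x : Equiv.Perm (Fin n)) {a b k : Fin n}
    (hk : k ∈ ({a, b} : Finset (Fin n))ᶜ) : (x * Equiv.swap a b) k = x k := by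
  simp only [Finset.mem_compl, Finset.mem_insert, Finset.mem_singleton, not_or] at hk
  rw [Equiv.Perm.mul_apply, Equiv.swap_apply_of_ne_of_ne hk.1 hk.2]

lemma sum_sub_sum_mul_swap {n : ℕ} (x : Equiv.Perm (Fin n)) {a b : Fin n} (hab : a ≠ b)
    (f : Fin n → Fin n → ℚ) :
    ∑ k, f k (x k) - ∑ k, f k ((x * Equiv.swap a b) k) =
      f a (x a) + f b (x b) - f a (x b) - f b (x a) := by
  have h : ∑ k ∈ ({a, b} : Finset (Fin n))ᶜ, f k ((x * Equiv.swap a b) k) =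
      ∑ k ∈ ({a, b} : Finset (Fin n))ᶜ, f k (x k) :=
    Finset.sum_congr rfl fun k hk => by rw [mul_swap_apply_of_mem_compl_pair x hk]
  rw [sum_eq_add_add_sum_compl_pair hab, sum_eq_add_add_sum_compl_pair hab, h]
  simp only [Equiv.Perm.mul_apply, Equiv.swap_apply_left, Equiv.swap_apply_right]
  ring

lemma Nat.cast_lt_cast_add_half {p q : ℕ} : (p : ℚ) < (q : ℚ) + 1 / 2 ↔ p ≤ q := by
  constructor
  · intro h
    have : (p : ℚ) < ((q + 1 : ℕ) : ℚ) := by push_cast; linarith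
    exact Nat.lt_succ_iff.mp (by exact_mod_cast this)
  · intro h
    have : (p : ℚ) ≤ q := by exact_mod_cast h
    linarith

lemma Nat.cast_add_half_lt_cast {p q : ℕ} : (q : ℚ) + 1 / 2 < (p : ℚ) ↔ q < p := by
  constructor
  · intro h
    have : (q : ℚ) < p := by linarith
    exact_mod_cast this
  · intro h
    have : ((q + 1 : ℕ) : ℚ) ≤ p := by exact_mod_cast h
    push_cast at this
    linarith

/-- Twice the contribution to `J(x, σ)` of the generator point `(k, c)` and the marking
in the square `(m, r)`. -/
def markWeight {n : ℕ} (m r k c : Fin n) : ℚ :=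
  (if k ≤ m ∧ c ≤ r then 1 else 0) + (if m < k ∧ r < c then 1 else 0)

lemma Jq_ptsGen_ptsMark {n : ℕ} (x σ : Equiv.Perm (Fin n)) (S : Finset (Fin n)) :
    Jq n (ptsGen n x) (ptsMark n σ) Finset.univ S =
      (∑ m ∈ S, ∑ k, markWeight m (σ m) k (x k)) / 2 := by
  simp only [Jq, Icnt, ptsGen, ptsMark, Nat.cast_lt_cast_add_half, Nat.cast_add_half_lt_cast,
    markWeight, Finset.sum_add_distrib, Fin.le_def, Fin.lt_def]
  rw [Finset.sum_comm]

lemma markWeight_alternating_sum {n : ℕ} (a b c d m r : Fin n) :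
    markWeight m r a c + markWeight m r b d - markWeight m r a d - markWeight m r b c =
      2 * (rayDiff a b m * rayDiff c d r) := by
  simp only [markWeight, rayDiff, ← not_le]
  by_cases h₁ : a ≤ m <;> by_cases h₂ : b ≤ m <;> by_cases h₃ : c ≤ r <;>
    by_cases h₄ : d ≤ r <;> simp [h₁, h₂, h₃, h₄] <;> norm_num

lemma Jq_ptsMark_sub_mul_swap {n : ℕ} (x σ : Equiv.Perm (Fin n)) {a b : Fin n} (hab : a ≠ b)
    (S : Finset (Fin n)) :
    Jq n (ptsGen n x) (ptsMark n σ) Finset.univ S -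
        Jq n (ptsGen n (x * Equiv.swap a b)) (ptsMark n σ) Finset.univ S =
      ∑ m ∈ S, rayDiff a b m * rayDiff (x a) (x b) (σ m) := by
  rw [Jq_ptsGen_ptsMark, Jq_ptsGen_ptsMark, ← sub_div, ← Finset.sum_sub_distrib]
  simp only [sum_sub_sum_mul_swap x hab (markWeight _ _), markWeight_alternating_sum]
  rw [← Finset.mul_sum]
  ring

/-- The indicator that the point `(k, c)` lies strictly below and to the left of `(l, d)`. -/
def southWestInd {n : ℕ} (k c l d : Fin n) : ℚ :=
  if k < l ∧ c < d then 1 else 0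

lemma Jq_ptsGen_self {n : ℕ} (x : Equiv.Perm (Fin n)) :
    Jq n (ptsGen n x) (ptsGen n x) Finset.univ Finset.univ =
      ∑ k, ∑ l, southWestInd k (x k) l (x l) := by
  simp only [Jq, Icnt, ptsGen, Nat.cast_lt, southWestInd, Fin.lt_def]
  ring

lemma southWestInd_alternating_sum {n : ℕ} {a b c d k r : Fin n} (hka : k ≠ a) (hkb : k ≠ b)
    (hrc : r ≠ c) (hrd : r ≠ d) :
    (southWestInd a c k r + southWestInd b d k r - southWestInd a d k r
        - southWestInd b c k r) +
      (southWestInd k r a c + southWestInd k r b d - southWestInd k r a d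
        - southWestInd k r b c) = 2 * (rayDiff a b k * rayDiff c d r) := by
  rw [← markWeight_alternating_sum]
  simp only [southWestInd, markWeight, hka.symm.le_iff_lt, hkb.symm.le_iff_lt,
    hrc.symm.le_iff_lt, hrd.symm.le_iff_lt]
  ring

lemma southWestInd_corners {n : ℕ} {a b c d : Fin n} (hab : a ≠ b) (hcd : c ≠ d) :
    southWestInd a c b d + southWestInd b d a c - southWestInd a d b c - southWestInd b c a d =
      (1 - 2 * wrapInd a b) * (1 - 2 * wrapInd c d) := by
  simp only [southWestInd, wrapInd]
  rcases lt_or_gt_of_ne hab with h | h <;> rcases lt_or_gt_of_ne hcd with h' | h' <;>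
    simp [h, h', h.not_gt, h'.not_gt] <;> norm_num

lemma Jq_ptsGen_self_sub_mul_swap {n : ℕ} (x : Equiv.Perm (Fin n)) {a b : Fin n}
    (hab : a ≠ b) :
    Jq n (ptsGen n x) (ptsGen n x) Finset.univ Finset.univ -
        Jq n (ptsGen n (x * Equiv.swap a b)) (ptsGen n (x * Equiv.swap a b))
          Finset.univ Finset.univ =
      2 * ∑ k ∈ ({a, b} : Finset (Fin n))ᶜ, rayDiff a b k * rayDiff (x a) (x b) (x k) +
        (1 - 2 * wrapInd a b) * (1 - 2 * wrapInd (x a) (x b)) := by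
  have expand (y : Equiv.Perm (Fin n)) :
      ∑ k, ∑ l, southWestInd k (y k) l (y l) =
        southWestInd a (y a) b (y b) + southWestInd b (y b) a (y a) +
          ∑ k ∈ ({a, b} : Finset (Fin n))ᶜ,
            (southWestInd a (y a) k (y k) + southWestInd b (y b) k (y k) +
              southWestInd k (y k) a (y a) + southWestInd k (y k) b (y b)) +
          ∑ k ∈ ({a, b} : Finset (Fin n))ᶜ, ∑ l ∈ ({a, b} : Finset (Fin n))ᶜ,
            southWestInd k (y k) l (y l) := by
    simp only [sum_eq_add_add_sum_compl_pair hab, Finset.sum_add_distrib]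
    simp only [southWestInd, lt_self_iff_false, false_and, if_false]
    ring
  have outer : ∑ k ∈ ({a, b} : Finset (Fin n))ᶜ, ∑ l ∈ ({a, b} : Finset (Fin n))ᶜ,
        southWestInd k ((x * Equiv.swap a b) k) l ((x * Equiv.swap a b) l) =
      ∑ k ∈ ({a, b} : Finset (Fin n))ᶜ, ∑ l ∈ ({a, b} : Finset (Fin n))ᶜ,
        southWestInd k (x k) l (x l) :=
    Finset.sum_congr rfl fun k hk => Finset.sum_congr rfl fun l hl => by
      rw [mul_swap_apply_of_mem_compl_pair x hk, mul_swap_apply_of_mem_compl_pair x hl]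
  have hya : (x * Equiv.swap a b) a = x b := by simp
  have hyb : (x * Equiv.swap a b) b = x a := by simp
  rw [Jq_ptsGen_self, Jq_ptsGen_self, expand, expand, outer, hya, hyb,
    ← southWestInd_corners hab (x.injective.ne hab), Finset.mul_sum]
  have mixed : ∑ k ∈ ({a, b} : Finset (Fin n))ᶜ,
        2 * (rayDiff a b k * rayDiff (x a) (x b) (x k)) =
      ∑ k ∈ ({a, b} : Finset (Fin n))ᶜ,
          (southWestInd a (x a) k (x k) + southWestInd b (x b) k (x k) +
            southWestInd k (x k) a (x a) + southWestInd k (x k) b (x b)) -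
        ∑ k ∈ ({a, b} : Finset (Fin n))ᶜ,
          (southWestInd a (x b) k ((x * Equiv.swap a b) k) +
            southWestInd b (x a) k ((x * Equiv.swap a b) k) +
            southWestInd k ((x * Equiv.swap a b) k) a (x b) +
            southWestInd k ((x * Equiv.swap a b) k) b (x a)) := by
    rw [← Finset.sum_sub_distrib]
    refine Finset.sum_congr rfl fun k hk => ?_
    rw [mul_swap_apply_of_mem_compl_pair x hk]
    simp only [Finset.mem_compl, Finset.mem_insert, Finset.mem_singleton, not_or] at hk
    rw [← southWestInd_alternating_sum hk.1 hk.2 (x.injective.ne hk.1) (x.injective.ne hk.2)]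
    ring
  rw [mixed]
  ring

lemma RectEmpty.sum_rayDiff_mul {n : ℕ} {x : Equiv.Perm (Fin n)} {a b : Fin n}
    (h : RectEmpty n x a b) (hab : a ≠ b) :
    ∑ k ∈ ({a, b} : Finset (Fin n))ᶜ, rayDiff a b k * rayDiff (x a) (x b) (x k) =
      -wrapInd a b * (∑ r, cyclicInd (x a) (x b) r - 1)
        - wrapInd (x a) (x b) * (∑ k, cyclicInd a b k - 1)
        + (n - 2) * (wrapInd a b * wrapInd (x a) (x b)) := by
  have hU := sum_eq_add_add_sum_compl_pair hab (cyclicInd a b)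
  have hV := sum_eq_add_add_sum_compl_pair hab fun k => cyclicInd (x a) (x b) (x k)
  have hone := sum_eq_add_add_sum_compl_pair hab fun _ => wrapInd a b * wrapInd (x a) (x b)
  rw [Equiv.sum_comp x (cyclicInd (x a) (x b)), cyclicInd_left (x.injective.ne hab),
    cyclicInd_right] at hV
  rw [cyclicInd_left hab, cyclicInd_right] at hU
  rw [Finset.sum_const, Finset.card_univ, Fintype.card_fin, nsmul_eq_mul] at hone
  have hsum : ∑ k ∈ ({a, b} : Finset (Fin n))ᶜ, rayDiff a b k * rayDiff (x a) (x b) (x k) =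
      ∑ k ∈ ({a, b} : Finset (Fin n))ᶜ, (-(wrapInd a b * cyclicInd (x a) (x b) (x k))
        - wrapInd (x a) (x b) * cyclicInd a b k + wrapInd a b * wrapInd (x a) (x b)) := by
    refine Finset.sum_congr rfl fun k hk => ?_
    simp only [Finset.mem_compl, Finset.mem_insert, Finset.mem_singleton, not_or] at hk
    rw [rayDiff_mul_rayDiff hab, h.cyclicInd_mul_eq_zero hk.1 hk.2]
    ring
  rw [hsum, Finset.sum_add_distrib, Finset.sum_sub_distrib, Finset.sum_neg_distrib,
    ← Finset.mul_sum, ← Finset.mul_sum, hU, hV]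
  linear_combination -hone

lemma sum_rayDiff_mul_mark {n : ℕ} (x σ : Equiv.Perm (Fin n)) {a b : Fin n} (hab : a ≠ b)
    (S : Finset (Fin n)) :
    ∑ m ∈ S, rayDiff a b m * rayDiff (x a) (x b) (σ m) =
      ((∑ m ∈ S, cntMark n σ x a b m : ℕ) : ℚ)
        - wrapInd a b * ∑ m ∈ S, cyclicInd (x a) (x b) (σ m)
        - wrapInd (x a) (x b) * ∑ m ∈ S, cyclicInd a b m
        + S.card * (wrapInd a b * wrapInd (x a) (x b)) := by
  simp only [rayDiff_mul_rayDiff hab, Finset.sum_add_distrib, Finset.sum_sub_distrib,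
    ← Finset.mul_sum, Nat.cast_sum, cntMark_eq_cyclicInd_mul, Finset.sum_const, nsmul_eq_mul]
  ring

lemma Equiv.Perm.sum_sameCycle_comp {n : ℕ} (σ τ : Equiv.Perm (Fin n)) (m₀ : Fin n)
    (f : Fin n → ℚ) :
    ∑ m ∈ Finset.univ.filter fun k => (τ⁻¹ * σ).SameCycle m₀ k, f (σ m) =
      ∑ m ∈ Finset.univ.filter fun k => (τ⁻¹ * σ).SameCycle m₀ k, f (τ m) := by
  refine Finset.sum_equiv (τ⁻¹ * σ) (fun k => ?_) (fun k _ => ?_)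
  · simp only [Finset.mem_filter, Finset.mem_univ, true_and, Equiv.Perm.sameCycle_apply_right]
  · simp

theorem rectangle_degree_change (n : ℕ) (hn : 1 ≤ n) (σO σX : Equiv.Perm (Fin n))
    (hXO : ∀ m, σX m ≠ σO m)
    (x : Equiv.Perm (Fin n)) (a b : Fin n) (hab : a ≠ b)
    (hempty : RectEmpty n x a b) :
    Maslov n σO x - Maslov n σO (x * Equiv.swap a b) =
      1 - 2 * ((∑ m : Fin n, cntMark n σO x a b m : ℕ) : ℚ) ∧
    ∀ m0 : Fin n,
      Alex n σO σX (Finset.univ.filter fun k => (σX⁻¹ * σO).SameCycle m0 k) x -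
        Alex n σO σX (Finset.univ.filter fun k => (σX⁻¹ * σO).SameCycle m0 k)
          (x * Equiv.swap a b) =
      ((∑ m ∈ Finset.univ.filter fun k => (σX⁻¹ * σO).SameCycle m0 k,
          cntMark n σX x a b m : ℕ) : ℚ) -
      ((∑ m ∈ Finset.univ.filter fun k => (σX⁻¹ * σO).SameCycle m0 k,
          cntMark n σO x a b m : ℕ) : ℚ) := by
  constructor
  · have hmark := Jq_ptsMark_sub_mul_swap x σO hab Finset.univ
    have hself := Jq_ptsGen_self_sub_mul_swap x hab
    rw [sum_rayDiff_mul_mark x σO hab, Equiv.sum_comp σO (cyclicInd (x a) (x b)),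
      Finset.card_univ, Fintype.card_fin] at hmark
    rw [hempty.sum_rayDiff_mul hab] at hself
    unfold Maslov
    linear_combination hself - 2 * hmark
  · intro m₀
    have hX := Jq_ptsMark_sub_mul_swap x σX hab
      (Finset.univ.filter fun k => (σX⁻¹ * σO).SameCycle m₀ k)
    have hO := Jq_ptsMark_sub_mul_swap x σO hab
      (Finset.univ.filter fun k => (σX⁻¹ * σO).SameCycle m₀ k)
    rw [sum_rayDiff_mul_mark x _ hab] at hX hO
    rw [Equiv.Perm.sum_sameCycle_comp] at hO
    unfold Alex
    linear_combination hX - hO
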